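/- arXiv:2006.12897 — 3 statements merged into one kernel-verified Lean document; each statement's English description precedes it below -/
import Mathlib

section
/- Let (V,dist) be a metric space, let ρ > 0, let i ≥ 1 be an integer, and let I ⊆ V be a nonempty finite set. For a real x ≥ 0 and an integer j, let ⟨x⟩_j = min{(69+δ)·ρ·2^j : δ ∈ ℕ and δ·ρ·2^j ≥ x}. For distinct u, v ∈ V define dist'(v,u) = min_{p∈I} (dist(v,p) + ⟨dist(p,u)⟩_i). Suppose there exists p' ∈ I with dist(v,p') + dist(p',u) ≤ dist(v,u) + 68·ρ·2^i. Then: (a) dist'(v,u) ≤ dist(v,u) + 138·ρ·2^i; and (b) for every integer j ≥ i+1 and every p ∈ V, dist'(v,u) ≤ dist(v,p) + ⟨dist(p,u)⟩_j. -/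
/-- `⟨x⟩_j`: `x` rounded up to the next multiple of `ρ·2^j` and shifted by `69·ρ·2^j`. -/
noncomputable def roundDist (ρ : ℝ) (j : ℤ) (x : ℝ) : ℝ :=
  sInf {y | ∃ δ : ℕ, y = (69 + (δ : ℝ)) * (ρ * 2 ^ j) ∧ x ≤ (δ : ℝ) * (ρ * 2 ^ j)}

theorem roundDist_le_aux (ρ : ℝ) (hρ : 0 < ρ) (j : ℤ) (x : ℝ) (hx : 0 ≤ x) :
    roundDist ρ j x ≤ x + 70 * (ρ * 2 ^ j) := by
  have hr : (0:ℝ) < ρ * 2 ^ j := by positivity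
  have hc := Nat.ceil_lt_add_one (div_nonneg hx hr.le)
  have hl := Nat.le_ceil (x / (ρ * 2 ^ j))
  rw [div_le_iff₀ hr] at hl
  have h1 : roundDist ρ j x ≤ (69 + (⌈x / (ρ * 2 ^ j)⌉₊ : ℝ)) * (ρ * 2 ^ j) := by
    refine csInf_le ⟨0, ?_⟩ ⟨_, rfl, hl⟩
    rintro y ⟨δ, rfl, -⟩
    positivity
  have h2 := mul_lt_mul_of_pos_right hc hr
  rw [add_mul, div_mul_cancel₀ _ hr.ne'] at h2
  linarith

theorem le_roundDist_aux (ρ : ℝ) (hρ : 0 < ρ) (j : ℤ) (x : ℝ) :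
    x + 69 * (ρ * 2 ^ j) ≤ roundDist ρ j x := by
  have hr : (0:ℝ) < ρ * 2 ^ j := by positivity
  refine le_csInf ?_ ?_
  · have hl := Nat.le_ceil (x / (ρ * 2 ^ j))
    rw [div_le_iff₀ hr] at hl
    exact ⟨_, _, rfl, hl⟩
  · rintro y ⟨δ, rfl, h⟩
    linarith

/-- bounds on the rounded interface-respecting distance (Lemma "dist'"). -/
theorem rounded_interface_dist {V : Type*} [MetricSpace V] (ρ : ℝ) (hρ : 0 < ρ)
    (i : ℤ) (hi : 1 ≤ i) (I : Finset V) (hI : I.Nonempty)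
    (u v : V) (huv : u ≠ v)
    (hp' : ∃ p' ∈ I, dist v p' + dist p' u ≤ dist v u + 68 * ρ * 2 ^ i) :
    (I.inf' hI fun p => dist v p + roundDist ρ i (dist p u)) ≤ dist v u + 138 * ρ * 2 ^ i ∧
    ∀ j : ℤ, i + 1 ≤ j → ∀ p : V,
      (I.inf' hI fun p => dist v p + roundDist ρ i (dist p u)) ≤
        dist v p + roundDist ρ j (dist p u) := by
  obtain ⟨p', hpI, hp⟩ := hp'
  have hr : (0:ℝ) < ρ * 2 ^ i := by positivity
  have ha : (I.inf' hI fun p => dist v p + roundDist ρ i (dist p u))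
      ≤ dist v u + 138 * ρ * 2 ^ i := by
    refine (Finset.inf'_le _ hpI).trans ?_
    have := roundDist_le_aux ρ hρ i (dist p' u) dist_nonneg
    linarith
  refine ⟨ha, fun j hj p => ha.trans ?_⟩
  have h1 := le_roundDist_aux ρ hρ j (dist p u)
  have h2 : (2:ℝ) ^ (i + 1) ≤ 2 ^ j := zpow_le_zpow_right₀ (by norm_num) hj
  rw [zpow_add_one₀ (by norm_num)] at h2
  have h3 : ρ * (2 ^ i * 2) ≤ ρ * 2 ^ j := mul_le_mul_of_nonneg_left h2 hρ.le
  have h4 := dist_triangle v p u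
  linarith
end

section
/- Let φ be a CNF formula over variables x_1,…,x_k (k ≥ 1) with clauses C_1,…,C_ℓ, let c > 4 be a real number, and let q ≥ 1 be an integer. Let (V,dist) be a metric space containing pairwise distinct points t_1,…,t_k, u_1,…,u_k, f_1,…,f_k, v_1,…,v_ℓ, and set F = {t_1,f_1,…,t_k,f_k}. Assume: (i) for every variable index x, dist(u_x,t_x) = dist(u_x,f_x) = 1, and for every g ∈ F, dist(u_x,g) ≥ 1 with equality only if g ∈ {t_x,f_x}; (ii) for every clause index i, dist(v_i,g) = (11c)^i for every literal facility g of C_i, and for every g ∈ F, dist(v_i,g) ≥ (11c)^i with equality only if g is a literal facility of C_i. Then φ is satisfiable if and only if there exists S ⊆ F with |S| ≤ k and Σ_{x=1}^{k} dist(u_x,S)^q + Σ_{i=1}^{ℓ} dist(v_i,S)^q ≤ k + Σ_{i=1}^{ℓ} (11c)^{iq}. -/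
/-- correctness of the SAT reduction for k-Clustering^q. -/
theorem sat_reduction_kClustering {V : Type*} [MetricSpace V] [DecidableEq V]
    (k ℓ : ℕ) (hk : 1 ≤ k) (C : Fin ℓ → Finset (Fin k × Bool))
    (c : ℝ) (hc : 4 < c) (q : ℕ) (hq : 1 ≤ q)
    (t u f : Fin k → V) (v : Fin ℓ → V)
    (hinj : Function.Injective (fun z : (Fin k ⊕ Fin k ⊕ Fin k) ⊕ Fin ℓ =>
      match z with
      | .inl (.inl x) => t x
      | .inl (.inr (.inl x)) => u x
      | .inl (.inr (.inr x)) => f x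
      | .inr i => v i))
    (F : Finset V) (hF : F = Finset.image t Finset.univ ∪ Finset.image f Finset.univ)
    (hi : ∀ x : Fin k, dist (u x) (t x) = 1 ∧ dist (u x) (f x) = 1 ∧
      ∀ g ∈ F, 1 ≤ dist (u x) g ∧ (dist (u x) g = 1 → g = t x ∨ g = f x))
    (hii : ∀ i : Fin ℓ,
      (∀ g : V, (∃ p ∈ C i, (p.2 = true ∧ g = t p.1) ∨ (p.2 = false ∧ g = f p.1)) →
        dist (v i) g = (11 * c) ^ (i.1 + 1)) ∧
      ∀ g ∈ F, (11 * c) ^ (i.1 + 1) ≤ dist (v i) g ∧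
        (dist (v i) g = (11 * c) ^ (i.1 + 1) →
          ∃ p ∈ C i, (p.2 = true ∧ g = t p.1) ∨ (p.2 = false ∧ g = f p.1))) :
    (∃ α : Fin k → Bool, ∀ i : Fin ℓ, ∃ p ∈ C i, α p.1 = p.2) ↔
    (∃ S : Finset V, ∃ hS : S.Nonempty, S ⊆ F ∧ S.card ≤ k ∧
      (∑ x : Fin k, (S.inf' hS fun g => dist (u x) g) ^ q) +
      (∑ i : Fin ℓ, (S.inf' hS fun g => dist (v i) g) ^ q) ≤
        (k : ℝ) + ∑ i : Fin ℓ, ((11 * c) ^ (i.1 + 1)) ^ q) := by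
  have htt : ∀ x y, t x = t y → x = y := fun x y h => by
    have := @hinj (.inl (.inl x)) (.inl (.inl y)) h
    simpa using this
  have hff : ∀ x y, f x = f y → x = y := fun x y h => by
    have := @hinj (.inl (.inr (.inr x))) (.inl (.inr (.inr y))) h
    simpa using this
  have htf : ∀ x y, t x ≠ f y := fun x y h => by
    have := @hinj (.inl (.inl x)) (.inl (.inr (.inr y))) h
    simp at this
  have hpos : (0 : ℝ) < 11 * c := by linarith
  have htF : ∀ x, t x ∈ F := fun x => by simp [hF]
  have hfF : ∀ x, f x ∈ F := fun x => by simp [hF]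
  constructor
  · rintro ⟨α, hα⟩
    let s : Fin k → V := fun x => if α x = true then t x else f x
    have hsF : ∀ x, s x ∈ F := fun x => by
      by_cases h : α x = true <;> simp [s, h, htF, hfF]
    have hne : (Finset.univ.image s).Nonempty := ⟨s ⟨0, hk⟩, by simp⟩
    refine ⟨Finset.univ.image s, hne, ?_, ?_, ?_⟩
    · intro g hg
      obtain ⟨x, -, rfl⟩ := Finset.mem_image.1 hg
      exact hsF x
    · simpa using Finset.card_image_le (s := (Finset.univ : Finset (Fin k))) (f := s)
    · apply add_le_add
      · calc _ ≤ ∑ x : Fin k, (1 : ℝ) := by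
              apply Finset.sum_le_sum
              intro x _
              apply pow_le_one₀
              · exact Finset.le_inf' _ _ (fun g _ => dist_nonneg)
              · refine Finset.inf'_le_of_le _ (b := s x) (by simp) ?_
                by_cases h : α x = true
                · simp [s, h, (hi x).1]
                · simp [s, h, (hi x).2.1]
          _ = k := by simp
      · apply Finset.sum_le_sum
        intro i _
        obtain ⟨p, hp, hpα⟩ := hα i
        apply pow_le_pow_left₀
        · exact Finset.le_inf' _ _ (fun g _ => dist_nonneg)
        · refine Finset.inf'_le_of_le _ (b := s p.1) (by simp) (le_of_eq ?_)
          apply (hii i).1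
          refine ⟨p, hp, ?_⟩
          cases h : p.2
          · right; simp [s, hpα, h]
          · left; simp [s, hpα, h]
  · rintro ⟨S, hS, hSF, hcard, hsum⟩
    have h1 : ∀ x ∈ (Finset.univ : Finset (Fin k)),
        (1 : ℝ) ≤ (S.inf' hS fun g => dist (u x) g) ^ q := fun x _ =>
      one_le_pow₀ (Finset.le_inf' _ _ fun g hg => ((hi x).2.2 g (hSF hg)).1)
    have h2 : ∀ i ∈ (Finset.univ : Finset (Fin ℓ)),
        ((11 * c) ^ (i.1 + 1)) ^ q ≤ (S.inf' hS fun g => dist (v i) g) ^ q := fun i _ =>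
      pow_le_pow_left₀ (by positivity)
        (Finset.le_inf' _ _ fun g hg => ((hii i).2 g (hSF hg)).1) _
    have s1 := Finset.sum_le_sum h1
    have s2 := Finset.sum_le_sum h2
    have hk1 : ∑ x : Fin k, (1 : ℝ) = k := by simp
    have e1 := (Finset.sum_eq_sum_iff_of_le h1).1 (by linarith)
    have e2 := (Finset.sum_eq_sum_iff_of_le h2).1 (by linarith)
    have hs : ∀ x, ∃ g ∈ S, g = t x ∨ g = f x := fun x => by
      obtain ⟨g, hg, hge⟩ := Finset.exists_mem_eq_inf' hS (fun g => dist (u x) g)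
      refine ⟨g, hg, ((hi x).2.2 g (hSF hg)).2 ?_⟩
      have := e1 x (Finset.mem_univ _)
      rw [hge] at this
      exact (pow_eq_one_iff_of_nonneg dist_nonneg (by omega)).1 this.symm
    choose s hsS hst using hs
    have hsinj : Function.Injective s := by
      intro x y hxy
      rcases hst x with h | h <;> rcases hst y with h' | h' <;> rw [h, h'] at hxy
      · exact htt _ _ hxy
      · exact absurd hxy (htf _ _)
      · exact absurd hxy.symm (htf _ _)
      · exact hff _ _ hxy
    have hSeq : Finset.univ.image s = S := by
      apply Finset.eq_of_subset_of_card_le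
      · intro g hg
        obtain ⟨x, -, rfl⟩ := Finset.mem_image.1 hg
        exact hsS x
      · rw [Finset.card_image_of_injective _ hsinj]; simpa using hcard
    refine ⟨fun x => decide (s x = t x), fun i => ?_⟩
    obtain ⟨g, hg, hge⟩ := Finset.exists_mem_eq_inf' hS (fun g => dist (v i) g)
    have h3 := e2 i (Finset.mem_univ _)
    rw [hge] at h3
    have h4 := (pow_left_inj₀ (by positivity) dist_nonneg (by omega)).1 h3
    obtain ⟨p, hp, hpg⟩ := ((hii i).2 g (hSF hg)).2 h4.symm
    refine ⟨p, hp, ?_⟩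
    rw [← hSeq] at hg
    obtain ⟨x, -, rfl⟩ := Finset.mem_image.1 hg
    rcases hpg with ⟨hb, h⟩ | ⟨hb, h⟩ <;> rcases hst x with h' | h'
    · have : x = p.1 := htt _ _ (h'.symm.trans h)
      subst this
      simp [hb, h]
    · exact absurd (h.symm.trans h') (htf _ _)
    · exact absurd (h'.symm.trans h) (htf _ _)
    · have : x = p.1 := hff _ _ (h'.symm.trans h)
      subst this
      simp [hb, h, (htf _ _).symm]
end

section
/- Let φ be a CNF formula over variables x_1,…,x_k (k ≥ 1) with clauses C_1,…,C_ℓ, let c > 4 be a real number, and let q ≥ 1 be an integer. Let (V,dist) be a metric space containing pairwise distinct points t_1,…,t_k, u_1,…,u_k, f_1,…,f_k, v_1,…,v_ℓ, and set F = {t_1,f_1,…,t_k,f_k}. Assume: (i) for every variable index x, dist(u_x,t_x) = dist(u_x,f_x) = 1, and for every g ∈ F with g ∉ {t_x,f_x}, dist(u_x,g) ≥ 1 + 22c; (ii) for every clause index i, dist(v_i,g) = (11c)^i for every literal facility g of C_i, and for every g ∈ F, dist(v_i,g) ≥ (11c)^i with equality only if g is a literal facility of C_i. Then φ is satisfiable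 if and only if there exists a nonempty S ⊆ F with |S| + Σ_{x=1}^{k} dist(u_x,S)^q + Σ_{i=1}^{ℓ} dist(v_i,S)^q ≤ 2k + Σ_{i=1}^{ℓ} (11c)^{iq}. -/
/-- correctness of the SAT reduction for uniform Facility Location^q. -/
theorem sat_reduction_facilityLocation {V : Type*} [MetricSpace V] [DecidableEq V]
    (k ℓ : ℕ) (hk : 1 ≤ k) (C : Fin ℓ → Finset (Fin k × Bool))
    (c : ℝ) (hc : 4 < c) (q : ℕ) (hq : 1 ≤ q)
    (t u f : Fin k → V) (v : Fin ℓ → V)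
    (hinj : Function.Injective (fun z : (Fin k ⊕ Fin k ⊕ Fin k) ⊕ Fin ℓ =>
      match z with
      | .inl (.inl x) => t x
      | .inl (.inr (.inl x)) => u x
      | .inl (.inr (.inr x)) => f x
      | .inr i => v i))
    (F : Finset V) (hF : F = Finset.image t Finset.univ ∪ Finset.image f Finset.univ)
    (hi : ∀ x : Fin k, dist (u x) (t x) = 1 ∧ dist (u x) (f x) = 1 ∧
      ∀ g ∈ F, g ≠ t x → g ≠ f x → 1 + 22 * c ≤ dist (u x) g)
    (hii : ∀ i : Fin ℓ,
      (∀ g : V, (∃ p ∈ C i, (p.2 = true ∧ g = t p.1) ∨ (p.2 = false ∧ g = f p.1)) →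
        dist (v i) g = (11 * c) ^ (i.1 + 1)) ∧
      ∀ g ∈ F, (11 * c) ^ (i.1 + 1) ≤ dist (v i) g ∧
        (dist (v i) g = (11 * c) ^ (i.1 + 1) →
          ∃ p ∈ C i, (p.2 = true ∧ g = t p.1) ∨ (p.2 = false ∧ g = f p.1))) :
    (∃ α : Fin k → Bool, ∀ i : Fin ℓ, ∃ p ∈ C i, α p.1 = p.2) ↔
    (∃ S : Finset V, ∃ hS : S.Nonempty, S ⊆ F ∧
      (S.card : ℝ) +
      (∑ x : Fin k, (S.inf' hS fun g => dist (u x) g) ^ q) +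
      (∑ i : Fin ℓ, (S.inf' hS fun g => dist (v i) g) ^ q) ≤
        2 * (k : ℝ) + ∑ i : Fin ℓ, ((11 * c) ^ (i.1 + 1)) ^ q) := by
  have htinj : Function.Injective t := fun a b h => by
    have := @hinj (.inl (.inl a)) (.inl (.inl b)) h
    simpa using this
  have hfinj : Function.Injective f := fun a b h => by
    have := @hinj (.inl (.inr (.inr a))) (.inl (.inr (.inr b))) h
    simpa using this
  have htf : ∀ a b, t a ≠ f b := fun a b h => by
    have := @hinj (.inl (.inl a)) (.inl (.inr (.inr b))) h
    simp at this
  have hpos : 0 < 11 * c := by linarith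
  constructor
  · rintro ⟨α, hα⟩
    let s : Fin k → V := fun x => if α x = true then t x else f x
    have hS : (Finset.image s Finset.univ).Nonempty :=
      ⟨s ⟨0, hk⟩, Finset.mem_image_of_mem _ (Finset.mem_univ _)⟩
    have hmem : ∀ x, s x ∈ Finset.image s Finset.univ :=
      fun x => Finset.mem_image_of_mem _ (Finset.mem_univ _)
    refine ⟨_, hS, ?_, ?_⟩
    · intro g hg
      obtain ⟨x, -, rfl⟩ := Finset.mem_image.1 hg
      rw [hF]
      by_cases h : α x = true <;> simp [s, h]
    · have h1 : ((Finset.image s Finset.univ).card : ℝ) ≤ k := by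
        have := Finset.card_image_le (s := Finset.univ) (f := s)
        rw [Finset.card_univ, Fintype.card_fin] at this
        exact_mod_cast this
      have h2 : (∑ x : Fin k, ((Finset.image s Finset.univ).inf' hS
          fun g => dist (u x) g) ^ q) ≤ k := by
        have : ∀ x ∈ (Finset.univ : Finset (Fin k)), ((Finset.image s Finset.univ).inf' hS
          fun g => dist (u x) g) ^ q ≤ (1 : ℝ) := by
          intro x _
          apply pow_le_one₀
          · exact Finset.le_inf' _ _ fun g _ => dist_nonneg
          · refine (Finset.inf'_le _ (hmem x)).trans ?_
            by_cases h : α x = true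
            · simp [s, h, (hi x).1]
            · simp [s, h, (hi x).2.1]
        simpa using Finset.sum_le_sum this
      have h3 : (∑ i : Fin ℓ, ((Finset.image s Finset.univ).inf' hS
          fun g => dist (v i) g) ^ q) ≤ ∑ i : Fin ℓ, ((11 * c) ^ (i.1 + 1)) ^ q := by
        apply Finset.sum_le_sum
        intro i _
        apply pow_le_pow_left₀
        · exact Finset.le_inf' _ _ fun g _ => dist_nonneg
        · obtain ⟨p, hp, hpe⟩ := hα i
          refine (Finset.inf'_le _ (hmem p.1)).trans ?_
          refine ((hii i).1 _ ⟨p, hp, ?_⟩).le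
          cases h : p.2 <;> simp [s, hpe, h]
      linarith
  · rintro ⟨S, hS, hSF, hle⟩
    let n : Fin k → ℝ := fun x => (if t x ∈ S then 1 else 0) + (if f x ∈ S then 1 else 0)
    have hcard : ∑ x, n x ≤ (S.card : ℝ) := by
      have hsub : (Finset.univ.filter fun x => t x ∈ S).image t ∪
          (Finset.univ.filter fun x => f x ∈ S).image f ⊆ S := by
        intro g hg
        simp only [Finset.mem_union, Finset.mem_image, Finset.mem_filter] at hg
        rcases hg with ⟨x, ⟨_, h⟩, rfl⟩ | ⟨x, ⟨_, h⟩, rfl⟩ <;> exact h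
      have hd : Disjoint ((Finset.univ.filter fun x => t x ∈ S).image t)
          ((Finset.univ.filter fun x => f x ∈ S).image f) := by
        rw [Finset.disjoint_left]
        intro g h1 h2
        obtain ⟨a, -, rfl⟩ := Finset.mem_image.1 h1
        obtain ⟨b, -, h⟩ := Finset.mem_image.1 h2
        exact htf a b h.symm
      have := Finset.card_le_card hsub
      rw [Finset.card_union_of_disjoint hd, Finset.card_image_of_injective _ htinj,
        Finset.card_image_of_injective _ hfinj] at this
      simp only [n, Finset.sum_add_distrib, Finset.sum_boole]
      exact_mod_cast this
    have hu1 : ∀ x, 1 ≤ (S.inf' hS fun g => dist (u x) g) := by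
      intro x
      refine Finset.le_inf' _ _ fun g hg => ?_
      by_cases h1 : g = t x
      · rw [h1, (hi x).1]
      by_cases h2 : g = f x
      · rw [h2, (hi x).2.1]
      have := (hi x).2.2 g (hSF hg) h1 h2
      linarith
    have hu0 : ∀ x, t x ∉ S → f x ∉ S → 2 < (S.inf' hS fun g => dist (u x) g) ^ q := by
      intro x h1 h2
      have : 1 + 22 * c ≤ (S.inf' hS fun g => dist (u x) g) := by
        refine Finset.le_inf' _ _ fun g hg => (hi x).2.2 g (hSF hg) ?_ ?_
        · rintro rfl; exact h1 hg
        · rintro rfl; exact h2 hg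
      have h3 := le_self_pow₀ (hu1 x) (n := q) (by omega)
      linarith
    have hge : ∀ x ∈ (Finset.univ : Finset (Fin k)),
        (2 : ℝ) ≤ n x + (S.inf' hS fun g => dist (u x) g) ^ q := by
      intro x _
      have h1 := one_le_pow₀ (hu1 x) (n := q)
      have h0 := hu0 x
      by_cases ht : t x ∈ S <;> by_cases hf : f x ∈ S <;> simp [n, ht, hf] at h0 ⊢ <;> linarith
    have hv1 : ∀ i, (11 * c) ^ (i.1 + 1) ≤ (S.inf' hS fun g => dist (v i) g) := by
      intro i
      exact Finset.le_inf' _ _ fun g hg => ((hii i).2 g (hSF hg)).1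
    have hvge : ∀ i ∈ (Finset.univ : Finset (Fin ℓ)), ((11 * c) ^ (i.1 + 1)) ^ q ≤
        (S.inf' hS fun g => dist (v i) g) ^ q := by
      intro i _
      exact pow_le_pow_left₀ (by positivity) (hv1 i) q
    have hs1 := Finset.sum_le_sum hge
    have hs2 := Finset.sum_le_sum hvge
    have hk2 : ∑ x : Fin k, (2 : ℝ) = 2 * k := by simp [mul_comm]
    have e1 := (Finset.sum_eq_sum_iff_of_le hge).1 (by
      apply le_antisymm hs1
      rw [Finset.sum_add_distrib, hk2]; linarith)
    have e2 := (Finset.sum_eq_sum_iff_of_le hvge).1 (by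
      apply le_antisymm hs2
      rw [Finset.sum_add_distrib, hk2] at hs1; linarith)
    refine ⟨fun x => decide (t x ∈ S), fun i => ?_⟩
    have e3 : (11 * c) ^ (i.1 + 1) = (S.inf' hS fun g => dist (v i) g) := by
      have h := e2 i (Finset.mem_univ _)
      exact (pow_left_inj₀ (by positivity) (le_trans (by positivity) (hv1 i)) (by omega)).1 h
    obtain ⟨g, hg, hge'⟩ := Finset.exists_mem_eq_inf' hS (fun g => dist (v i) g)
    obtain ⟨p, hp, h⟩ := ((hii i).2 g (hSF hg)).2 (by rw [e3, hge'])
    refine ⟨p, hp, ?_⟩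
    rcases h with ⟨h, rfl⟩ | ⟨h, rfl⟩
    · simp [h, hg]
    · have h1 := one_le_pow₀ (hu1 p.1) (n := q)
      have h2 := e1 p.1 (Finset.mem_univ _)
      by_cases ht : t p.1 ∈ S
      · simp only [n, ht, hg, if_true] at h2
        linarith
      · simp [h, ht]
end
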